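/- arXiv:2105.02009 — 3 statements merged into one kernel-verified Lean document; each statement's English description precedes it below -/
import Mathlib

section
/- Half the sum of the positive coroots, ½λ, lies in the cocharacter lattice X^∨(T) when G is the special orthogonal group SO(n, 𝔽_q), and also when G is the spin group Spin(n, 𝔽_q) with n ≡ 0, 1, or −1 mod 8. -/
/-!
Statement 6 (Example of §3.2 of the paper).

The condition "`½λ ∈ X^∨(T)`" (with `λ` the sum of the positive coroots
determined by `B`) holds for `G = SO(n, 𝔽_q)` and for `G = Spin(n, 𝔽_q)` with
`n ≡ 0, ±1 mod 8`.

Modelling: we work at the level of root data, using the standard coordinates.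
Write `m = ⌊n/2⌋`.  The cocharacter lattice of a maximal torus is identified
with `ℤ^m` for `SO(n)` and with the coroot lattice
`{x ∈ ℤ^m : Σᵢ xᵢ even}` for `Spin(n)`.  The positive coroots are, for
`n = 2m+1` (type `B_m`): `eᵢ - eⱼ, eᵢ + eⱼ (i < j)` and `2eᵢ`; for `n = 2m`
(type `D_m`): `eᵢ - eⱼ, eᵢ + eⱼ (i < j)`.  `λ` is their sum, and the claim
"`½λ ∈ X^∨(T)`" reads: `λ = 2μ` for some `μ` in the lattice.
-/

noncomputable section

/-- The standard basis vector `eᵢ` of `ℤ^m`. -/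
def stdVec (m : ℕ) (i : Fin m) : Fin m → ℤ := Pi.single i 1

/-- The sum of the positive coroots of the root system of type `B_m`
(the case `G = SO(2m+1)` or `Spin(2m+1)`):
positive coroots are `eᵢ - eⱼ`, `eᵢ + eⱼ` for `i < j`, and `2eᵢ`. -/
def sumPosCorootsB (m : ℕ) : Fin m → ℤ :=
  (∑ p ∈ Finset.univ.filter (fun p : Fin m × Fin m => p.1 < p.2),
      ((stdVec m p.1 - stdVec m p.2) + (stdVec m p.1 + stdVec m p.2)))
    + ∑ i : Fin m, (2 : ℤ) • stdVec m i

/-- The sum of the positive coroots of the root system of type `D_m`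
(the case `G = SO(2m)` or `Spin(2m)`):
positive coroots are `eᵢ - eⱼ`, `eᵢ + eⱼ` for `i < j`. -/
def sumPosCorootsD (m : ℕ) : Fin m → ℤ :=
  ∑ p ∈ Finset.univ.filter (fun p : Fin m × Fin m => p.1 < p.2),
      ((stdVec m p.1 - stdVec m p.2) + (stdVec m p.1 + stdVec m p.2))

/-- The sum of the positive coroots for the root system of `SO(n)`/`Spin(n)`:
type `B_{n/2}` if `n` is odd, type `D_{n/2}` if `n` is even. -/
def sumPosCorootsSO (n : ℕ) : Fin (n / 2) → ℤ :=
  if n % 2 = 1 then sumPosCorootsB (n / 2) else sumPosCorootsD (n / 2)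

/-- Twice the number of pairs `i < j` in `Fin m` is `m (m - 1)`. -/
lemma card_pairs_mul_two (m : ℕ) :
    (Finset.univ.filter (fun p : Fin m × Fin m => p.1 < p.2)).card * 2 = m * (m - 1) := by
  rw [← Finset.sum_range_id_mul_two, Finset.card_filter, Fintype.sum_prod_type_right,
    ← Fin.sum_univ_eq_sum_range (fun i => i)]
  congr 1
  refine Finset.sum_congr rfl fun j _ => ?_
  rw [← Finset.card_filter]
  have : Finset.univ.filter (fun i : Fin m => i < j) = Finset.Iio j := by
    ext i
    simp
  rw [this, Fin.card_Iio]

lemma sum_stdVec (m : ℕ) (i : Fin m) : ∑ k, stdVec m i k = 1 := by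
  simp [stdVec]

/-- Half the sum of the positive coroots in type `D`. -/
def halfD (m : ℕ) : Fin m → ℤ :=
  ∑ p ∈ Finset.univ.filter (fun p : Fin m × Fin m => p.1 < p.2), stdVec m p.1

/-- Half the sum of the positive coroots in type `B`. -/
def halfB (m : ℕ) : Fin m → ℤ := halfD m + ∑ i : Fin m, stdVec m i

lemma two_halfD (m : ℕ) : (2 : ℤ) • halfD m = sumPosCorootsD m := by
  unfold halfD sumPosCorootsD
  rw [Finset.smul_sum]
  refine Finset.sum_congr rfl fun p _ => ?_
  rw [two_smul]
  abel

lemma two_halfB (m : ℕ) : (2 : ℤ) • halfB m = sumPosCorootsB m := by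
  have h : sumPosCorootsB m = sumPosCorootsD m + ∑ i : Fin m, (2 : ℤ) • stdVec m i := rfl
  rw [h, halfB, smul_add, two_halfD, Finset.smul_sum]

lemma sum_halfD (m : ℕ) : ∑ k, halfD m k =
    ((Finset.univ.filter (fun p : Fin m × Fin m => p.1 < p.2)).card : ℤ) := by
  simp only [halfD, Finset.sum_apply]
  rw [Finset.sum_comm]
  simp [sum_stdVec]

lemma sum_halfB (m : ℕ) : ∑ k, halfB m k =
    ((Finset.univ.filter (fun p : Fin m × Fin m => p.1 < p.2)).card : ℤ) + m := by
  simp only [halfB, Pi.add_apply, Finset.sum_add_distrib, sum_halfD, Finset.sum_apply]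
  rw [Finset.sum_comm]
  simp [sum_stdVec]

/-- `½λ` lies in the cocharacter lattice `X^∨(T)`:
(1) for `G = SO(n, 𝔽_q)`, whose cocharacter lattice is all of `ℤ^{⌊n/2⌋}`;
(2) for `G = Spin(n, 𝔽_q)` with `n ≡ 0, ±1 mod 8`, whose cocharacter lattice
is the coroot lattice `{x ∈ ℤ^{⌊n/2⌋} : Σᵢ xᵢ even}`. -/
theorem half_sum_pos_coroots_in_cocharacter_lattice_SO_Spin (n : ℕ) :
    -- `SO(n, 𝔽_q)`:
    (∃ μ : Fin (n / 2) → ℤ, (2 : ℤ) • μ = sumPosCorootsSO n) ∧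
    -- `Spin(n, 𝔽_q)` with `n ≡ 0, ±1 mod 8`:
    (n % 8 = 0 ∨ n % 8 = 1 ∨ n % 8 = 7 →
      ∃ μ : Fin (n / 2) → ℤ,
        (2 : ℤ) • μ = sumPosCorootsSO n ∧ Even (∑ i, μ i)) := by
  by_cases hn : n % 2 = 1
  · have h2 : (2 : ℤ) • halfB (n / 2) = sumPosCorootsSO n := by
      rw [two_halfB, sumPosCorootsSO, if_pos hn]
    refine ⟨⟨_, h2⟩, fun h => ⟨_, h2, ?_⟩⟩
    rw [sum_halfB]
    have hc := card_pairs_mul_two (n / 2)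
    generalize (Finset.univ.filter
      (fun p : Fin (n / 2) × Fin (n / 2) => p.1 < p.2)).card = c at hc
    norm_cast
    rcases h with h | h | h
    · omega
    · obtain ⟨k, hk⟩ : ∃ k, n / 2 = 4 * k := ⟨n / 8, by omega⟩
      rw [hk, mul_assoc] at hc
      rw [hk, Nat.even_iff]
      omega
    · obtain ⟨k, hk⟩ : ∃ k, n / 2 = 4 * k + 3 := ⟨n / 8, by omega⟩
      rw [hk, show (4 * k + 3) * (4 * k + 3 - 1) = 4 * (4 * (k * k) + 5 * k + 1) + 2 by
        rw [show 4 * k + 3 - 1 = 4 * k + 2 by omega]; ring] at hc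
      rw [hk, Nat.even_iff]
      omega
  · have h2 : (2 : ℤ) • halfD (n / 2) = sumPosCorootsSO n := by
      rw [two_halfD, sumPosCorootsSO, if_neg hn]
    refine ⟨⟨_, h2⟩, fun h => ⟨_, h2, ?_⟩⟩
    rw [sum_halfD]
    have hc := card_pairs_mul_two (n / 2)
    generalize (Finset.univ.filter
      (fun p : Fin (n / 2) × Fin (n / 2) => p.1 < p.2)).card = c at hc
    norm_cast
    obtain ⟨k, hk⟩ : ∃ k, n / 2 = 4 * k := ⟨n / 8, by omega⟩
    rw [hk, mul_assoc] at hc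
    rw [Nat.even_iff]
    omega
end
end

section
/- Let H be a finite group and N a normal subgroup with H/N abelian, and let π be an irreducible self-dual complex representation of N. Then there exists an irreducible complex representation π' of H whose restriction to N contains π as a constituent, and for any such π' there exists a one-dimensional character ν of H, trivial on N, together with an isomorphism f: π' ≅ π'^∨ ⊗ ν⁻¹, where π'^∨ denotes the contragredient of π'. -/
/-!
Statement 9.

Let `H` be a finite group, `N` a normal subgroup with `H/N` abelian, and `π`
an irreducible self-dual complex representation of `N`.  Then there exists an
irreducible complex representation `π'` of `H` whose restriction to `N`
contains `π` as a constituent, and for any such `π'` there exist a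
one-dimensional character `ν` of `H`, trivial on `N`, and an isomorphism
`f : π' ≅ π'^∨ ⊗ ν⁻¹` (where `π'^∨` is the contragredient of `π'`).
-/

noncomputable section

/-- A finite-dimensional complex representation of `H`, bundled. -/
structure FinDimRep (H : Type) [Group H] where
  carrier : Type
  [acg : AddCommGroup carrier]
  [mod : Module ℂ carrier]
  [fd : FiniteDimensional ℂ carrier]
  ρ : Representation ℂ H carrier

attribute [instance] FinDimRep.acg FinDimRep.mod FinDimRep.fd

/-- A representation is irreducible. -/
def RepIrreducible {H V : Type} [Group H] [AddCommGroup V] [Module ℂ V]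
    (ρ : Representation ℂ H V) : Prop :=
  (∃ v : V, v ≠ 0) ∧
    ∀ W : Submodule ℂ V, (∀ (g : H), ∀ v ∈ W, ρ g v ∈ W) → W = ⊥ ∨ W = ⊤

/-- A representation is self-dual: isomorphic to its contragredient, i.e.
it carries a nondegenerate invariant pairing. -/
def RepSelfDual {H V : Type} [Group H] [AddCommGroup V] [Module ℂ V]
    (ρ : Representation ℂ H V) : Prop :=
  ∃ e : V ≃ₗ[ℂ] Module.Dual ℂ V, ∀ (g : H) (v w : V), e (ρ g v) (ρ g w) = e v w

/-- The restriction of `π' = ρ'.ρ` to the subgroup `N` contains `π` as a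
constituent: there is a nonzero `N`-equivariant map `π → Res_N π'`
(for complex representations of finite groups this is equivalent to `π`
being a direct summand of the restriction). -/
def ContainsRes {H : Type} [Group H] (N : Subgroup H) {V : Type}
    [AddCommGroup V] [Module ℂ V] (π : Representation ℂ ↥N V)
    (ρ' : FinDimRep H) : Prop :=
  ∃ φ : V →ₗ[ℂ] ρ'.carrier, φ ≠ 0 ∧
    ∀ (n : ↥N) (v : V), φ (π n v) = ρ'.ρ ↑n (φ v)

theorem aux_minimal {G V : Type} [Group G] [AddCommGroup V] [Module ℂ V]
    [FiniteDimensional ℂ V] (ρ : Representation ℂ G V) (n : ℕ) :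
    ∀ U₀ : Submodule ℂ V, Module.finrank ℂ U₀ ≤ n → U₀ ≠ ⊥ →
      (∀ (g : G), ∀ v ∈ U₀, ρ g v ∈ U₀) →
      ∃ U : Submodule ℂ V, U ≤ U₀ ∧ U ≠ ⊥ ∧ (∀ (g : G), ∀ v ∈ U, ρ g v ∈ U) ∧
        ∀ W : Submodule ℂ V, W ≤ U → (∀ (g : G), ∀ v ∈ W, ρ g v ∈ W) → W = ⊥ ∨ W = U := by
  induction n with
  | zero =>
    intro U₀ h0 hne
    exact absurd (Submodule.finrank_eq_zero.mp (Nat.le_zero.mp h0)) hne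
  | succ n ih =>
    intro U₀ hn hne hinv
    by_cases h : ∀ W : Submodule ℂ V, W ≤ U₀ → (∀ (g : G), ∀ v ∈ W, ρ g v ∈ W) → W = ⊥ ∨ W = U₀
    · exact ⟨U₀, le_rfl, hne, hinv, h⟩
    · push Not at h
      obtain ⟨W, hW, hWi, hW0, hW1⟩ := h
      have hlt := Submodule.finrank_lt_finrank_of_lt (lt_of_le_of_ne hW hW1)
      obtain ⟨U, hU, hU2⟩ := ih W (by omega) hW0 hWi
      exact ⟨U, hU.trans hW, hU2⟩

/-- Averaging a linear map over a finite group. -/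
theorem aux_avg {G V W : Type} [Group G] [Finite G] [AddCommGroup V] [Module ℂ V]
    [AddCommGroup W] [Module ℂ W] (ρ : Representation ℂ G V) (σ : Representation ℂ G W)
    (A : V →ₗ[ℂ] W) : ∃ B : V →ₗ[ℂ] W, (∀ g v, B (ρ g v) = σ g (B v)) ∧
      (∀ φ : W →ₗ[ℂ] V, (∀ g w, φ (σ g w) = ρ g (φ w)) →
        ((∀ w, A (φ w) = w) → ∀ w, B (φ w) = w) ∧ ((∀ v, φ (A v) = v) → ∀ v, φ (B v) = v)) := by
  cases nonempty_fintype G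
  have hc : (Fintype.card G : ℂ) ≠ 0 := by exact_mod_cast Fintype.card_ne_zero
  have hinv : ∀ (g : G) (v : V), ρ g (ρ g⁻¹ v) = v := by
    intro g v
    rw [← Module.End.mul_apply, ← map_mul]; simp
  have hinv' : ∀ (g : G) (v : W), σ g (σ g⁻¹ v) = v := by
    intro g v
    rw [← Module.End.mul_apply, ← map_mul]; simp
  refine ⟨(Fintype.card G : ℂ)⁻¹ • ∑ g : G, (σ g) ∘ₗ A ∘ₗ (ρ g⁻¹), ?_, ?_⟩
  · intro g v
    simp only [LinearMap.smul_apply, LinearMap.sum_apply, LinearMap.comp_apply, map_smul, map_sum]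
    congr 1
    rw [← Equiv.sum_comp (Equiv.mulLeft g)]
    refine Finset.sum_congr rfl fun x _ => ?_
    simp only [Equiv.coe_mulLeft, ← Module.End.mul_apply, ← map_mul]
    rw [map_mul σ, Module.End.mul_apply, Module.End.mul_apply]
    simp
  · intro φ hφ
    constructor
    · intro h w
      simp only [LinearMap.smul_apply, LinearMap.sum_apply, LinearMap.comp_apply, ← hφ, h, hinv']
      simp [← Nat.cast_smul_eq_nsmul ℂ, smul_smul, hc]
    · intro h v
      simp only [LinearMap.smul_apply, LinearMap.sum_apply, LinearMap.comp_apply, hφ, map_smul,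
        map_sum, h, hinv]
      simp [← Nat.cast_smul_eq_nsmul ℂ, smul_smul, hc]

/-- Right translation on functions. -/
def auxTrans (H V : Type) [Group H] [AddCommGroup V] [Module ℂ V] :
    Representation ℂ H (H → V) where
  toFun g := LinearMap.funLeft ℂ V (fun x => x * g)
  map_one' := by ext; simp [LinearMap.funLeft]
  map_mul' a b := by
    refine LinearMap.ext fun f => funext fun x => ?_
    simp [LinearMap.funLeft_apply, mul_assoc]

theorem auxTrans_apply {H V : Type} [Group H] [AddCommGroup V] [Module ℂ V] (g x : H)
    (f : H → V) : auxTrans H V g f x = f (x * g) := rfl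

/-- Restriction to an invariant subspace. -/
def auxSub {H V : Type} [Group H] [AddCommGroup V] [Module ℂ V] (ρ : Representation ℂ H V)
    (U : Submodule ℂ V) (hU : ∀ (g : H), ∀ v ∈ U, ρ g v ∈ U) : Representation ℂ H U where
  toFun g := (ρ g).restrict (hU g)
  map_one' := by ext; simp
  map_mul' a b := by ext; simp

theorem auxSub_apply {H V : Type} [Group H] [AddCommGroup V] [Module ℂ V]
    (ρ : Representation ℂ H V)
    (U : Submodule ℂ V) (hU : ∀ (g : H), ∀ v ∈ U, ρ g v ∈ U) (g : H) (u : U) :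
    (auxSub ρ U hU g u : V) = ρ g u := rfl

theorem aux_exists
    (H : Type) [Group H] [Finite H]
    (N : Subgroup H)
    (V : Type) [AddCommGroup V] [Module ℂ V] [FiniteDimensional ℂ V]
    (π : Representation ℂ ↥N V)
    (hirr : RepIrreducible π) :
    (∃ π' : FinDimRep H, RepIrreducible π'.ρ ∧ ContainsRes N π π') := by
  classical
  obtain ⟨⟨v₀, hv₀⟩, hmin⟩ := hirr
  let F : Submodule ℂ (H → V) :=
    { carrier := {f | ∀ (n : N) (x : H), f (n * x) = π n (f x)}
      add_mem' := by
        intro a b ha hb n x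
        simp [ha n x, hb n x]
      zero_mem' := by intro n x; simp
      smul_mem' := by
        intro c a ha n x
        simp [ha n x] }
  have hF : ∀ (g : H), ∀ f ∈ F, auxTrans H V g f ∈ F := by
    intro g f hf n x
    simp only [auxTrans_apply, mul_assoc]
    exact hf n (x * g)
  have hF0 : F ≠ ⊥ := by
    let f : H → V := fun x => if hx : x ∈ N then π ⟨x, hx⟩ v₀ else 0
    have hf : f ∈ F := by
      intro n x
      by_cases hx : x ∈ N
      · have : (n : H) * x ∈ N := N.mul_mem n.2 hx
        simp only [f, hx, this, dif_pos]
        rw [← Module.End.mul_apply, ← map_mul]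
        rfl
      · have : ¬ (n : H) * x ∈ N := by rwa [N.mul_mem_cancel_left n.2]
        simp [f, hx, this]
    intro h
    rw [h, Submodule.mem_bot] at hf
    apply hv₀
    have h1 := congrFun hf 1
    simp only [f, N.one_mem, dif_pos, Pi.zero_apply] at h1
    have h2 : π ⟨1, N.one_mem⟩ = 1 := map_one π
    rw [h2] at h1
    exact h1
  obtain ⟨U, hUF, hU0, hUi, hUm⟩ := aux_minimal (auxTrans H V) _ F le_rfl hF0 hF
  obtain ⟨f, hfU, hf0⟩ := Submodule.exists_mem_ne_zero_of_ne_bot hU0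
  let ev : U →ₗ[ℂ] V := (LinearMap.proj (1 : H)) ∘ₗ U.subtype
  have hev : ∀ (n : N) (u : U), ev (auxSub (auxTrans H V) U hUi n u) = π n (ev u) := by
    intro n u
    have := hUF u.2 n 1
    simp only [mul_one] at this
    change auxTrans H V n u 1 = π n (u.1 1)
    rw [auxTrans_apply, one_mul, this]
  have hsurj : LinearMap.range ev = ⊤ := by
    refine (hmin (LinearMap.range ev) ?_).resolve_left ?_
    · rintro n _ ⟨u, rfl⟩
      exact ⟨_, hev n u⟩
    · intro hb
      apply hf0
      funext x
      have : ev ⟨_, hUi x f hfU⟩ ∈ LinearMap.range ev := ⟨_, rfl⟩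
      rw [hb, Submodule.mem_bot] at this
      change auxTrans H V x f 1 = 0 at this
      rwa [auxTrans_apply, one_mul] at this
  obtain ⟨s, hs⟩ := ev.exists_rightInverse_of_surjective hsurj
  obtain ⟨B, hB, hB2⟩ := aux_avg π ((auxSub (auxTrans H V) U hUi).comp N.subtype) s
  have hBs := (hB2 ev hev).2 (fun v => LinearMap.congr_fun hs v)
  refine ⟨⟨U, auxSub (auxTrans H V) U hUi⟩, ⟨⟨⟨f, hfU⟩, fun h => hf0 (congrArg Subtype.val h)⟩, ?_⟩, B, ?_, hB⟩
  · intro W hW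
    have := hUm (W.map U.subtype) (Submodule.map_subtype_le U W) (by
      rintro g _ ⟨w, hw, rfl⟩
      exact ⟨_, hW g w hw, rfl⟩)
    rcases this with h | h
    · left
      apply Submodule.map_injective_of_injective U.injective_subtype
      rw [h, Submodule.map_bot]
    · right
      apply Submodule.map_injective_of_injective U.injective_subtype
      rw [h, Submodule.map_subtype_top]
  · intro h
    apply hv₀
    rw [← hBs v₀, h]
    exact map_zero ev

theorem aux_form
    (H : Type) [Group H] [Finite H]
    (N : Subgroup H) [N.Normal]
    (habel : ∀ a b : H ⧸ N, a * b = b * a)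
    (V : Type) [AddCommGroup V] [Module ℂ V]
    (π : Representation ℂ ↥N V)
    (hirr : RepIrreducible π) (hsd : RepSelfDual π)
    (W : Type) [AddCommGroup W] [Module ℂ W] [FiniteDimensional ℂ W]
    (ρ : Representation ℂ H W) (hρ : RepIrreducible ρ)
    (φ : V →ₗ[ℂ] W) (hφ0 : φ ≠ 0) (hφ : ∀ (n : ↥N) (v : V), φ (π n v) = ρ ↑n (φ v)) :
      ∃ ν : H →* ℂˣ, (∀ n : ↥N, ν ↑n = 1) ∧
        ∃ f : W ≃ₗ[ℂ] Module.Dual ℂ W,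
          ∀ (g : H) (v : W),
            f (ρ g v) = ((ν g : ℂ))⁻¹ • (ρ.dual g (f v)) := by
  obtain ⟨⟨v₀, hv₀⟩, hmin⟩ := hirr
  obtain ⟨e, he⟩ := hsd
  have hinj : LinearMap.ker φ = ⊥ := by
    refine (hmin (LinearMap.ker φ) ?_).resolve_right ?_
    · intro n v hv
      rw [LinearMap.mem_ker] at hv ⊢
      rw [hφ, hv, map_zero]
    · intro h
      exact hφ0 (LinearMap.ker_eq_top.mp h)
  obtain ⟨p, hp⟩ := φ.exists_leftInverse_of_injective hinj
  obtain ⟨P, hP, hP2⟩ := aux_avg (ρ.comp N.subtype) π p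
  have hPφ := (hP2 φ hφ).1 (fun v => LinearMap.congr_fun hp v)
  let σ : Representation ℂ H (W →ₗ[ℂ] Module.Dual ℂ W) := Representation.linHom ρ ρ.dual
  have hσ : ∀ g b v w, σ g b v w = b (ρ g⁻¹ v) (ρ g⁻¹ w) := by
    intro g b v w
    simp [σ, Representation.linHom_apply, Representation.dual_apply, Module.Dual.transpose_apply]
  have hσm : ∀ g h b, σ (g * h) b = σ g (σ h b) := by
    intro g h b
    rw [map_mul, Module.End.mul_apply]
  let F : Submodule ℂ (W →ₗ[ℂ] Module.Dual ℂ W) :=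
    { carrier := {b | ∀ n ∈ N, σ n b = b}
      add_mem' := by
        intro a b ha hb n hn
        rw [map_add, ha n hn, hb n hn]
      zero_mem' := by intro n x; simp
      smul_mem' := by
        intro c a ha n hn
        rw [map_smul, ha n hn] }
  have hF : ∀ (g : H), ∀ f ∈ F, σ g f ∈ F := by
    intro g f hf n hn
    have h1 := hf (g⁻¹ * n * g) (by
      simpa using Subgroup.Normal.conj_mem ‹N.Normal› n hn g⁻¹)
    rw [← hσm, show n * g = g * (g⁻¹ * n * g) by group, hσm, h1]
  have hF0 : F ≠ ⊥ := by
    let b : W →ₗ[ℂ] Module.Dual ℂ W := e.toLinearMap.compl₁₂ P P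
    have hbF : b ∈ F := by
      intro n hn
      refine LinearMap.ext fun v => LinearMap.ext fun w => ?_
      rw [hσ]
      have h1 : ∀ x, P (ρ n⁻¹ x) = π (⟨n, hn⟩⁻¹) (P x) := fun x => hP (⟨n, hn⟩⁻¹) x
      change e (P _) (P _) = e (P v) (P w)
      rw [h1, h1, he]
    intro h
    rw [h, Submodule.mem_bot] at hbF
    apply hv₀
    apply e.injective
    rw [map_zero]
    ext w
    have := LinearMap.congr_fun (LinearMap.congr_fun hbF (φ v₀)) (φ w)
    change e (P _) (P _) = 0 at this
    rwa [hPφ, hPφ] at this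
  obtain ⟨U, hUF, hU0, hUi, hUm⟩ := aux_minimal σ _ F le_rfl hF0 hF
  obtain ⟨b, hbU, hb0⟩ := Submodule.exists_mem_ne_zero_of_ne_bot hU0
  have hcomm : ∀ g h, ∀ f ∈ U, σ g (σ h f) = σ h (σ g f) := by
    intro g h f hf
    have hn : g⁻¹ * h⁻¹ * g * h ∈ N := by
      rw [← QuotientGroup.eq_one_iff]
      have h2 : ((g⁻¹ * h⁻¹ * g * h : H) : H ⧸ N) = (g : H ⧸ N)⁻¹ * (h : H ⧸ N)⁻¹ * g * h := rfl
      rw [h2, mul_assoc, habel (g : H ⧸ N) h]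
      group
    have h1 := hUF hf _ hn
    rw [← hσm, ← hσm, show g * h = h * g * (g⁻¹ * h⁻¹ * g * h) by group, hσm, h1]
  have hscal : ∀ g, ∃ μ : ℂ, σ g b = μ • b := by
    intro g
    have : Nontrivial U := (Submodule.nontrivial_iff_ne_bot).mpr hU0
    obtain ⟨μ, hμ⟩ := Module.End.exists_eigenvalue (K := ℂ) (V := U) ((σ g).restrict (hUi g))
    obtain ⟨u, hu⟩ := hμ.exists_hasEigenvector
    have hu1 : σ g u = μ • (u : W →ₗ[ℂ] Module.Dual ℂ W) := congrArg Subtype.val hu.apply_eq_smul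
    have := (hUm (U ⊓ Module.End.eigenspace (σ g) μ) inf_le_left ?_).resolve_left ?_
    · refine ⟨μ, ?_⟩
      have hb := hbU
      rw [← this] at hb
      exact Module.End.mem_eigenspace_iff.mp hb.2
    · rintro h f ⟨hf, hf2⟩
      refine ⟨hUi h f hf, ?_⟩
      have hf2 := Module.End.mem_eigenspace_iff.mp hf2
      refine Module.End.mem_eigenspace_iff.mpr ?_
      rw [hcomm g h f hf, hf2, map_smul]
    · intro h
      have : (u : W →ₗ[ℂ] Module.Dual ℂ W) ∈ U ⊓ Module.End.eigenspace (σ g) μ :=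
        ⟨u.2, Module.End.mem_eigenspace_iff.mpr hu1⟩
      rw [h, Submodule.mem_bot] at this
      exact hu.2 (Subtype.ext this)
  choose μ hμ using hscal
  let m : H →* ℂ :=
    { toFun := μ
      map_one' := by
        apply smul_left_injective ℂ hb0
        simp [← hμ]
      map_mul' := by
        intro x y
        apply smul_left_injective ℂ hb0
        simp only [← hμ, hσm]
        rw [hμ y, map_smul, hμ x, smul_smul, mul_comm] }
  have hm : ∀ g, ((m.toHomUnits g : ℂˣ) : ℂ) = μ g := fun g => rfl
  have hμ0 : ∀ g, μ g ≠ 0 := fun g => by rw [← hm]; exact Units.ne_zero _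
  have hrel : ∀ g v, b (ρ g v) = (μ g)⁻¹ • (ρ.dual g (b v)) := by
    intro g v
    rw [eq_inv_smul_iff₀ (hμ0 g)]
    ext w
    have := LinearMap.congr_fun (LinearMap.congr_fun (hμ g) (ρ g v)) w
    rw [hσ, ← Module.End.mul_apply, ← map_mul] at this
    simp at this
    simp [this, Representation.dual_apply, Module.Dual.transpose_apply]
  have hker : LinearMap.ker b = ⊥ := by
    refine (hρ.2 (LinearMap.ker b) ?_).resolve_right ?_
    · intro g v hv
      rw [LinearMap.mem_ker] at hv ⊢
      rw [hrel, hv, map_zero, smul_zero]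
    · intro h
      exact hb0 (LinearMap.ker_eq_top.mp h)
  refine ⟨m.toHomUnits, ?_, LinearEquiv.ofInjectiveOfFinrankEq b (LinearMap.ker_eq_bot.mp hker)
    Subspace.dual_finrank_eq.symm, ?_⟩
  · intro n
    ext
    rw [hm]
    apply smul_left_injective ℂ hb0
    simp only [← hμ, Units.val_one, one_smul]
    exact hUF hbU n n.2
  · intro g v
    exact hrel g v

theorem exists_extension_and_twisted_selfduality
    (H : Type) [Group H] [Finite H]
    (N : Subgroup H) [N.Normal]
    (habel : ∀ a b : H ⧸ N, a * b = b * a)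
    (V : Type) [AddCommGroup V] [Module ℂ V] [FiniteDimensional ℂ V]
    (π : Representation ℂ ↥N V)
    (hirr : RepIrreducible π) (hsd : RepSelfDual π) :
    -- there exists an irreducible `π'` of `H` whose restriction to `N`
    -- contains `π` …
    (∃ π' : FinDimRep H, RepIrreducible π'.ρ ∧ ContainsRes N π π') ∧
    -- … and for any such `π'` there are `ν : H → ℂˣ` trivial on `N` and an
    -- isomorphism `f : π' ≅ π'^∨ ⊗ ν⁻¹`:
    ∀ π' : FinDimRep H, RepIrreducible π'.ρ → ContainsRes N π π' →
      ∃ ν : H →* ℂˣ, (∀ n : ↥N, ν ↑n = 1) ∧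
        ∃ f : π'.carrier ≃ₗ[ℂ] Module.Dual ℂ π'.carrier,
          ∀ (g : H) (v : π'.carrier),
            f (π'.ρ g v) = ((ν g : ℂ))⁻¹ • (π'.ρ.dual g (f v)) := by
  refine ⟨aux_exists H N V π hirr, ?_⟩
  rintro π' hπ' ⟨φ, hφ0, hφ⟩
  exact aux_form H N habel V π hirr hsd π'.carrier π'.ρ hπ' φ hφ0 hφ
end
end

section
/- Let H be a finite group, N a normal subgroup with H/N abelian, π an irreducible self-dual complex representation of N, and π' an irreducible complex representation of H whose restriction to N is multiplicity-free and contains π as a constituent, with f: π' ≅ π'^∨ ⊗ ν⁻¹ for a one-dimensional character ν of H trivial on N. Then sgn(π) = sgn(π'), where sgn(π') is the sign (symmetric versus skew-symmetric) of the associated form B_f. -/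
/-!
Statement 11.

Let `H` be a finite group, `N` a normal subgroup with `H/N` abelian, `π` an
irreducible self-dual complex representation of `N`, and `π'` an irreducible
complex representation of `H` whose restriction to `N` is multiplicity-free
and contains `π` as a constituent, equipped with `f : π' ≅ π'^∨ ⊗ ν⁻¹` for a
one-dimensional character `ν` of `H` trivial on `N`.  Then
`sgn(π) = sgn(π')`, where `sgn(π)` is the Frobenius–Schur indicator of `π`
(symmetric vs. skew-symmetric invariant form) and `sgn(π')` the sign
(symmetric vs. skew-symmetric) of the form `B_f(u,v) = f(u)(v)` associated
with `f`.
-/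

noncomputable section

/-- A `ρ`-invariant bilinear form. -/
def InvariantForm {H V : Type} [Group H] [AddCommGroup V] [Module ℂ V]
    (ρ : Representation ℂ H V) (B : V →ₗ[ℂ] V →ₗ[ℂ] ℂ) : Prop :=
  ∀ (g : H) (u v : V), B (ρ g u) (ρ g v) = B u v

/-- The space of equivariant linear maps between two representations. -/
def equivHoms {H W V : Type} [Group H] [AddCommGroup W] [Module ℂ W]
    [AddCommGroup V] [Module ℂ V]
    (τ : Representation ℂ H W) (ρ : Representation ℂ H V) :
    Submodule ℂ (W →ₗ[ℂ] V) where
  carrier := {φ | ∀ (n : H) (w : W), φ (τ n w) = ρ n (φ w)}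
  add_mem' := by
    intro φ ψ hφ hψ n w
    simp [hφ n w, hψ n w]
  zero_mem' := by
    intro n w
    simp
  smul_mem' := by
    intro c φ hφ n w
    simp [hφ n w]

/-- The restriction of `π'` to the subgroup `N` is multiplicity-free: every
irreducible representation of `N` has at most a one-dimensional space of
equivariant maps into the restriction. -/
def MultFreeRes {H : Type} [Group H] (N : Subgroup H) {V' : Type}
    [AddCommGroup V'] [Module ℂ V'] (π' : Representation ℂ H V') : Prop :=
  ∀ (W : Type) [AddCommGroup W] [Module ℂ W] [FiniteDimensional ℂ W]
    (τ : Representation ℂ ↥N W), RepIrreducible τ →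
      Module.finrank ℂ ↥(equivHoms τ (π'.comp N.subtype)) ≤ 1

theorem aux_schur {G U : Type} [Group G] [AddCommGroup U] [Module ℂ U] [FiniteDimensional ℂ U]
    (ρ : Representation ℂ G U) (hirr : RepIrreducible ρ) (χ : G → ℂ)
    (A : U ≃ₗ[ℂ] Module.Dual ℂ U) (hA : ∀ g u v, A (ρ g u) (ρ g v) = χ g * A u v)
    (C : U →ₗ[ℂ] U →ₗ[ℂ] ℂ) (hC : ∀ g u v, C (ρ g u) (ρ g v) = χ g * C u v) :
    ∃ c : ℂ, ∀ u v, C u v = c * A u v := by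
  obtain ⟨⟨v0, hv0⟩, hW⟩ := hirr
  have : Nontrivial U := ⟨⟨v0, 0, hv0⟩⟩
  let T : Module.End ℂ U := A.symm.toLinearMap ∘ₗ C
  have hT : ∀ u, A (T u) = C u := fun u => by simp [T]
  have hcomm : ∀ g u, T (ρ g u) = ρ g (T u) := by
    intro g u
    apply A.injective
    ext w
    have hw : w = ρ g (ρ g⁻¹ w) := by simp
    rw [hw, hT, hC, hA, hT]
  obtain ⟨c, hc⟩ := Module.End.exists_eigenvalue T
  have h1 := hW (Module.End.eigenspace T c) (by
    intro g v hv
    rw [Module.End.mem_eigenspace_iff] at hv ⊢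
    rw [hcomm, hv, map_smul])
  rcases h1 with h1 | h1
  · exact absurd h1 hc
  · refine ⟨c, fun u v => ?_⟩
    have hu : u ∈ Module.End.eigenspace T c := by rw [h1]; trivial
    rw [Module.End.mem_eigenspace_iff] at hu
    rw [← hT, hu]
    simp

theorem aux_section {G U W : Type} [Group G] [Finite G] [AddCommGroup U] [Module ℂ U]
    [AddCommGroup W] [Module ℂ W]
    (ρ : Representation ℂ G U) (τ : Representation ℂ G W)
    (T : W →ₗ[ℂ] U) (hT : ∀ g w, T (τ g w) = ρ g (T w)) (hs : Function.Surjective T) :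
    ∃ s : U →ₗ[ℂ] W, s ∈ equivHoms ρ τ ∧ ∀ u, T (s u) = u := by
  classical
  have := Fintype.ofFinite G
  obtain ⟨s0, hs0⟩ := T.exists_rightInverse_of_surjective (LinearMap.range_eq_top.2 hs)
  have hs0' : ∀ u, T (s0 u) = u := fun u => by simpa using LinearMap.congr_fun hs0 u
  have hcard : (Fintype.card G : ℂ) ≠ 0 := by simp
  refine ⟨(Fintype.card G : ℂ)⁻¹ • ∑ g : G, τ g ∘ₗ s0 ∘ₗ ρ g⁻¹, ?_, ?_⟩
  · intro n w
    simp only [LinearMap.smul_apply, LinearMap.sum_apply, LinearMap.comp_apply, map_smul, map_sum]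
    congr 1
    refine (Fintype.sum_equiv (Equiv.mulLeft n) _ _ ?_).symm
    intro g
    simp [mul_inv_rev, map_mul]
  · intro u
    simp only [LinearMap.smul_apply, LinearMap.sum_apply, LinearMap.comp_apply, map_smul, map_sum,
      hT, hs0']
    simp [← Nat.cast_smul_eq_nsmul ℂ, smul_smul, hcard]

/-- `sgn(π) = sgn(π')`: a nonzero invariant bilinear form
of `π` is symmetric iff the form `B_f` attached to `f` is symmetric (and
skew-symmetric iff `B_f` is). -/
theorem sgn_eq_sgn_of_multiplicity_free
    (H : Type) [Group H] [Finite H]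
    (N : Subgroup H) [N.Normal]
    (habel : ∀ a b : H ⧸ N, a * b = b * a)
    -- `π`, irreducible and self-dual on `N`:
    (V : Type) [AddCommGroup V] [Module ℂ V] [FiniteDimensional ℂ V]
    (π : Representation ℂ ↥N V)
    (hirr : RepIrreducible π) (hsd : RepSelfDual π)
    -- `π'`, irreducible on `H`, restriction to `N` multiplicity-free and
    -- containing `π` as a constituent:
    (V' : Type) [AddCommGroup V'] [Module ℂ V'] [FiniteDimensional ℂ V']
    (π' : Representation ℂ H V')
    (hirr' : RepIrreducible π')
    (hmf : MultFreeRes N π')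
    (hcont : ∃ φ : V →ₗ[ℂ] V', φ ≠ 0 ∧ ∀ (n : ↥N) (v : V), φ (π n v) = π' ↑n (φ v))
    -- the character `ν`, trivial on `N`, and `f : π' ≅ π'^∨ ⊗ ν⁻¹`:
    (ν : H →* ℂˣ) (hν : ∀ n : ↥N, ν ↑n = 1)
    (f : V' ≃ₗ[ℂ] Module.Dual ℂ V')
    (hf : ∀ (g : H) (v : V'), f (π' g v) = ((ν g : ℂ))⁻¹ • (π'.dual g (f v))) :
    -- conclusion: `sgn π = sgn π'`:
    ∀ B : V →ₗ[ℂ] V →ₗ[ℂ] ℂ, B ≠ 0 → InvariantForm π B →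
      ((∀ u v : V, B u v = B v u) ↔ (∀ u v : V', f u v = f v u)) ∧
      ((∀ u v : V, B u v = - B v u) ↔ (∀ u v : V', f u v = - f v u)) := by
  intro B hB0 hB
  obtain ⟨φ, hφ0, hφ⟩ := hcont
  obtain ⟨e, he⟩ := hsd
  have hfi : ∀ g u v, f (π' g u) (π' g v) = ((ν g : ℂ))⁻¹ * f u v := by
    intro g u v
    rw [hf]
    simp [Representation.dual_apply, Module.Dual.transpose_apply]
  obtain ⟨c, hc⟩ := aux_schur π' hirr' (fun g => ((ν g : ℂ))⁻¹) f hfi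
    (LinearMap.flip f.toLinearMap) (fun g u v => by simpa using hfi g v u)
  have hc : ∀ u v, f v u = c * f u v := fun u v => by simpa using hc u v
  let B' : V →ₗ[ℂ] V →ₗ[ℂ] ℂ := f.toLinearMap.compl₁₂ φ φ
  have hB'a : ∀ u v, B' u v = f (φ u) (φ v) := fun u v => by simp [B']
  have hB' : ∀ (g : N) u v, B' (π g u) (π g v) = B' u v := by
    intro g u v
    rw [hB'a, hB'a, hφ, hφ, hfi, hν]
    simp
  obtain ⟨b, hb⟩ := aux_schur π hirr (fun _ => 1) e (by simpa using he) B (fun g u v => by rw [hB g u v, one_mul])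
  obtain ⟨b', hb'⟩ := aux_schur π hirr (fun _ => 1) e (by simpa using he) B' (by simpa using hB')
  have hbne : b ≠ 0 := by
    rintro rfl
    apply hB0
    ext u v
    simp [hb]
  have hbne' : b' ≠ 0 := by
    rintro rfl
    have hz : ∀ u v, f (φ u) (φ v) = 0 := fun u v => by rw [← hB'a, hb']; simp
    let T : V' →ₗ[ℂ] V := e.symm.toLinearMap ∘ₗ (f.toLinearMap ∘ₗ φ).flip
    have heT : ∀ w u, e (T w) u = f (φ u) w := fun w u => by simp [T]
    have hTe : ∀ (g : N) w, T (π' g w) = π g (T w) := by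
      intro g w
      apply e.injective
      ext u
      have hu : u = π g (π g⁻¹ u) := by simp
      rw [hu, heT, he, heT, hφ, hfi, hν]
      simp
    have hrange := hirr.2 (LinearMap.range T) (by
      rintro g _ ⟨w, rfl⟩
      exact ⟨π' g w, hTe g w⟩)
    have hsurj : Function.Surjective T := by
      rcases hrange with h | h
      · exfalso
        apply hφ0
        ext u
        have : f (φ u) = 0 := by
          ext w
          rw [← heT, LinearMap.range_eq_bot.1 h]
          simp
        simpa using this
      · exact LinearMap.range_eq_top.1 h
    obtain ⟨s, hs, hTs⟩ := aux_section π (π'.comp N.subtype) T hTe hsurj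
    have hTφ : ∀ v, T (φ v) = 0 := by
      intro v
      apply e.injective
      ext u
      rw [heT, hz]
      simp
    have hfr := hmf V π hirr
    obtain ⟨x, hx⟩ := finrank_le_one_iff.1 hfr
    obtain ⟨a1, h1⟩ := hx ⟨φ, hφ⟩
    obtain ⟨a2, h2⟩ := hx ⟨s, hs⟩
    have h1 : a1 • (x : V →ₗ[ℂ] V') = φ := congrArg Subtype.val h1
    have h2 : a2 • (x : V →ₗ[ℂ] V') = s := congrArg Subtype.val h2
    have ha1 : a1 ≠ 0 := by
      rintro rfl
      exact hφ0 (by rw [← h1]; simp)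
    obtain ⟨v0, hv0⟩ := hirr.1
    have h3 : T ((x : V →ₗ[ℂ] V') v0) = 0 := by
      have := hTφ v0
      rw [← h1] at this
      simpa [ha1] using this
    apply hv0
    rw [← hTs v0, ← h2]
    simp [h3]
  have hec : ∀ u v, e v u = c * e u v := by
    intro u v
    have h := hc (φ u) (φ v)
    rw [← hB'a, ← hB'a, hb', hb'] at h
    apply mul_left_cancel₀ hbne'
    rw [h]; ring
  have hBc : ∀ u v, B v u = c * B u v := by
    intro u v
    rw [hb, hb, hec u v]; ring
  have hex : ∃ u v, B u v ≠ 0 := by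
    by_contra! h
    exact hB0 (by ext u v; simp [h])
  obtain ⟨u0, v0, h0⟩ := hex
  have hfx : ∃ u v, f u v ≠ 0 := by
    by_contra! h
    obtain ⟨w, hw⟩ := hirr'.1
    apply hw
    have : f w = 0 := by ext v; simp [h]
    simpa using this
  obtain ⟨u1, v1, h1⟩ := hfx
  refine ⟨⟨fun h u v => ?_, fun h u v => ?_⟩, ⟨fun h u v => ?_, fun h u v => ?_⟩⟩
  · have : c = 1 := mul_right_cancel₀ h0 (by rw [← hBc, ← h u0 v0, one_mul])
    rw [hc u v, this, one_mul]
  · have : c = 1 := mul_right_cancel₀ h1 (by rw [← hc, ← h u1 v1, one_mul])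
    rw [hBc u v, this, one_mul]
  · have : c = -1 := mul_right_cancel₀ h0 (by rw [← hBc, h v0 u0]; ring)
    rw [hc u v, this]; ring
  · have : c = -1 := mul_right_cancel₀ h1 (by rw [← hc, h v1 u1]; ring)
    rw [hBc u v, this]; ring
end
end
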